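/- The class of all finite path graphs is well-quasi-ordered by the induced subgraph relation, but it is not 2-well-quasi-ordered: there exists an infinite sequence of path graphs, each with a labelling of its vertices by a 2-element set, such that no earlier member admits a label-preserving induced-subgraph embedding into a later member. -/

import Mathlib

/-- A finite simple undirected graph, with vertex set `Fin n`. -/
structure FinGraph where
  n : ℕ
  adj : Fin n → Fin n → Prop
  symm : ∀ u v, adj u v → adj v u
  irrefl : ∀ u, ¬ adj u u

/-- The path graph `P_n` with vertices `1,…,n` and edges `{i, i+1}`. -/
def pathGraph (n : ℕ) : FinGraph where
  n := n
  adj := fun i j => i.val + 1 = j.val ∨ j.val + 1 = i.val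
  symm := fun u v h => h.symm
  irrefl := fun u h => by rcases h with h | h <;> omega

/-- A label-preserving induced-subgraph embedding between two `X`-labelled graphs. -/
def FinGraph.LEmb {X : Type} (G H : FinGraph)
    (lG : Fin G.n → X) (lH : Fin H.n → X) : Prop :=
  ∃ h : Fin G.n → Fin H.n, Function.Injective h ∧
    (∀ u v, H.adj (h u) (h v) ↔ G.adj u v) ∧ (∀ u, lH (h u) = lG u)

/-- An induced-subgraph embedding between two (unlabelled) graphs. -/
def FinGraph.Emb (G H : FinGraph) : Prop :=
  ∃ h : Fin G.n → Fin H.n, Function.Injective h ∧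
    (∀ u v, H.adj (h u) (h v) ↔ G.adj u v)

/-!
Mark the two end vertices of every path. An embedding that respects the marks sends the ends of
`P_m` to the ends of `P_n`, and an adjacency-preserving map does not increase distances, so
`n - 1 ≤ m - 1`. Hence a marked path with at least two vertices does not embed into any longer one.
-/

namespace pathGraph

theorem emb_of_le {m n : ℕ} (hmn : m ≤ n) : (pathGraph m).Emb (pathGraph n) :=
  ⟨Fin.castLE hmn, Fin.castLE_injective hmn, fun _ _ => Iff.rfl⟩

theorem partiallyWellOrderedOn_range :
    (Set.range pathGraph).PartiallyWellOrderedOn FinGraph.Emb := by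
  rw [← Set.image_univ]
  exact (Set.partiallyWellOrderedOn_of_wellQuasiOrdered wellQuasiOrdered_le _).image_of_monotone_on
    fun _ _ _ _ => emb_of_le

theorem abs_sub_eq_one_of_adj {n : ℕ} {u v : Fin n} (huv : (pathGraph n).adj u v) :
    |(u : ℤ) - v| = 1 := by
  rcases huv with h | h <;> rw [abs_eq zero_le_one] <;> omega

theorem abs_sub_le_mul_of_adj {R : Type*} [Ring R] [LinearOrder R] [IsOrderedRing R] {n : ℕ}
    {f : Fin n → R} {C : R} (hf : ∀ u v, (pathGraph n).adj u v → |f u - f v| ≤ C) (u v : Fin n) :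
    |f u - f v| ≤ C * |(u : R) - v| := by
  have bound_of_add (k : ℕ) : ∀ u v : Fin n, u.val + k = v.val → |f u - f v| ≤ C * k := by
    induction k with
    | zero =>
      intro u v huv
      obtain rfl : u = v := Fin.ext huv
      simp
    | succ k ih =>
      intro u v huv
      let w : Fin n := ⟨u.val + k, by omega⟩
      calc |f u - f v| ≤ |f u - f w| + |f w - f v| := abs_sub_le _ _ _
        _ ≤ C * k + C := add_le_add (ih u w rfl) (hf w v (Or.inl huv))
        _ = C * (k + 1 : ℕ) := by rw [Nat.cast_succ, mul_add_one]
  wlog huv : u ≤ v generalizing u v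
  · rw [abs_sub_comm, abs_sub_comm (u : R)]
    exact this v u (le_of_not_ge huv)
  · obtain ⟨k, hk⟩ := Nat.exists_eq_add_of_le huv
    simpa [hk] using bound_of_add k u v hk.symm

theorem abs_sub_le_of_map_adj {m n : ℕ} {f : Fin m → Fin n}
    (hf : ∀ u v, (pathGraph m).adj u v → (pathGraph n).adj (f u) (f v)) (u v : Fin m) :
    |(f u : ℤ) - f v| ≤ |(u : ℤ) - v| := by
  simpa only [one_mul] using abs_sub_le_mul_of_adj (f := fun w => (f w : ℤ))
    (fun u v huv => (abs_sub_eq_one_of_adj (hf u v huv)).le) u v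

/-- The labelling of the path `P_n` by two labels that marks its end vertices with `true`. -/
def endLabel (n : ℕ) (u : Fin n) : Bool :=
  decide (u.val = 0 ∨ u.val + 1 = n)

theorem endLabel_eq_true_iff {n : ℕ} {u : Fin n} :
    endLabel n u = true ↔ u.val = 0 ∨ u.val + 1 = n :=
  decide_eq_true_iff

theorem abs_sub_eq_of_endLabel {n : ℕ} {u v : Fin n} (hu : endLabel n u = true)
    (hv : endLabel n v = true) (huv : u ≠ v) : |(u : ℤ) - v| = n - 1 := by
  rw [endLabel_eq_true_iff] at hu hv
  have hval : u.val ≠ v.val := Fin.val_ne_of_ne huv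
  rcases abs_cases ((u : ℤ) - v) with h | h <;> omega

theorem le_of_lEmb_endLabel {m n : ℕ} (hm : 2 ≤ m)
    (h : (pathGraph m).LEmb (pathGraph n) (endLabel m) (endLabel n)) : n ≤ m := by
  obtain ⟨f, f_injective, f_adj, f_label⟩ := h
  let a : Fin m := ⟨0, by omega⟩
  let b : Fin m := ⟨m - 1, by omega⟩
  have ha : endLabel m a = true := endLabel_eq_true_iff.2 (Or.inl rfl)
  have hb : endLabel m b = true := endLabel_eq_true_iff.2 (Or.inr (Nat.sub_add_cancel (by omega)))
  have hab : a ≠ b := Fin.ne_of_val_ne (by change 0 ≠ m - 1; omega)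
  have : (n : ℤ) - 1 ≤ m - 1 := calc
    (n : ℤ) - 1 = |(Fin.val (f a) : ℤ) - Fin.val (f b)| :=
      (abs_sub_eq_of_endLabel ((f_label a).trans ha) ((f_label b).trans hb)
        (f_injective.ne hab)).symm
    _ ≤ |(a : ℤ) - b| := abs_sub_le_of_map_adj (fun u v => (f_adj u v).2) a b
    _ = m - 1 := abs_sub_eq_of_endLabel ha hb hab
  omega

end pathGraph

/-- The class of all finite path graphs is well-quasi-ordered by the induced subgraph
relation, but it is not `2`-well-quasi-ordered: there is an infinite sequence of path
graphs labelled by a set of at most two elements such that no earlier member admits a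
label-preserving induced-subgraph embedding into a later member. -/
theorem stmt17 :
    (∀ G : ℕ → FinGraph, (∀ i, ∃ n, G i = pathGraph n) →
      ∃ i j, i < j ∧ FinGraph.Emb (G i) (G j)) ∧
    (∃ (X : Type) (_ : Fintype X), Fintype.card X ≤ 2 ∧
      ∃ (G : ℕ → FinGraph) (l : (i : ℕ) → Fin (G i).n → X),
        (∀ i, ∃ n, G i = pathGraph n) ∧
        ∀ i j, i < j → ¬ FinGraph.LEmb (G i) (G j) (l i) (l j)) := by
  refine ⟨fun _ hG => pathGraph.partiallyWellOrderedOn_range.exists_lt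
      fun i => (hG i).imp fun _ => Eq.symm,
    Bool, inferInstance, Fintype.card_bool.le, fun i => pathGraph (i + 2),
    fun i => pathGraph.endLabel (i + 2), fun i => ⟨i + 2, rfl⟩, fun i j hij hemb => ?_⟩
  have : j + 2 ≤ i + 2 := pathGraph.le_of_lEmb_endLabel (Nat.le_add_left 2 i) hemb
  omega
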